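/- Let ε > 0 and δ > 0 be given, let d_1,…,d_N be positive integers with D = d_1+⋯+d_N, and assume d_ν > D − ε²·δ·D·(D+1)/N² for all ν = 1,…,N. Let φ ∈ ℂ^D be a fixed unit vector. Then the Haar probability of the set of U ∈ U(D) such that for every ν = 1,…,N one has | ‖U P_ν⁰ U⁻¹ φ‖² − d_ν/D | < ε·√(d_ν/(D·N)), is greater than 1 − δ. -/

import Mathlib

open MeasureTheory Filter

noncomputable section

/-- The unitary group U(D) of ℂ^D. -/
abbrev UG (D : ℕ) := Matrix.unitaryGroup (Fin D) ℂ

instance (D : ℕ) : MeasurableSpace (UG D) := borel _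
instance (D : ℕ) : BorelSpace (UG D) := ⟨rfl⟩

/-- The squared euclidean norm ‖v‖² on ℂ^D. -/
def nsq {D : ℕ} (v : Fin D → ℂ) : ℝ := ∑ i, ‖v i‖ ^ 2

/-- The hermitian inner product ⟨v,w⟩ on ℂ^D (conjugate-linear in the first variable). -/
def dotc {D : ℕ} (v w : Fin D → ℂ) : ℂ := ∑ i, (starRingEnd ℂ) (v i) * w i

/-- The orthogonal projection U P U⁻¹ onto the image under U of the range of P. -/
def rotProj {D : ℕ} (U : UG D) (P : Matrix (Fin D) (Fin D) ℂ) : Matrix (Fin D) (Fin D) ℂ :=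
  (U : Matrix (Fin D) (Fin D) ℂ) * P * ((U⁻¹ : UG D) : Matrix (Fin D) (Fin D) ℂ)

/-- The orthogonal projection P_ν⁰ onto the span of the standard basis vectors whose
indices lie in the ν-th block (of size d ν) of the partition d of D. -/
def blockProj {N : ℕ} (D : ℕ) (d : Fin N → ℕ) (ν : Fin N) : Matrix (Fin D) (Fin D) ℂ :=
  Matrix.diagonal (fun i => if (∑ μ ∈ Finset.univ.filter (fun μ => μ < ν), d μ) ≤ (i : ℕ) ∧
      (i : ℕ) < ∑ μ ∈ Finset.univ.filter (fun μ => μ ≤ ν), d μ then 1 else 0)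


instance ugCompact (D : ℕ) : CompactSpace (UG D) := by
  refine (isCompact_iff_compactSpace
    (s := (Matrix.unitaryGroup (Fin D) ℂ : Set (Matrix (Fin D) (Fin D) ℂ)))).1 ?_
  have hK : IsCompact (Set.univ.pi fun _ : Fin D => Set.univ.pi fun _ : Fin D =>
      Metric.closedBall (0 : ℂ) 1) :=
    isCompact_univ_pi fun _ => isCompact_univ_pi fun _ => isCompact_closedBall _ _
  refine hK.of_isClosed_subset ?_ ?_
  · have : (Matrix.unitaryGroup (Fin D) ℂ : Set (Matrix (Fin D) (Fin D) ℂ))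
        = {A | A * star A = 1} := by
      ext A; exact Matrix.mem_unitaryGroup_iff
    rw [this]
    exact isClosed_eq (by fun_prop) continuous_const
  · intro A hA i _ j _
    simpa using entry_norm_bound_of_unitary hA i j

lemma ug_right {D : ℕ} (μ : Measure (UG D)) [μ.IsHaarMeasure] [IsProbabilityMeasure μ] :
    μ.IsMulRightInvariant := by
  constructor
  intro g
  have : IsProbabilityMeasure (μ.map (· * g)) :=
    Measure.isProbabilityMeasure_map (by fun_prop)
  exact Measure.isHaarMeasure_eq_of_isProbabilityMeasure _ _

/-- Householder reflection -/
lemma hh_mem {D : ℕ} (v : Fin D → ℂ) (c : ℝ) (hc : (c : ℂ) * (star v ⬝ᵥ v) = 2) :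
    (1 - (c : ℂ) • Matrix.vecMulVec v (star v)) ∈ Matrix.unitaryGroup (Fin D) ℂ := by
  rw [Matrix.mem_unitaryGroup_iff]
  have h1 : star (1 - (c : ℂ) • Matrix.vecMulVec v (star v))
      = 1 - (c : ℂ) • Matrix.vecMulVec v (star v) := by
    rw [Matrix.star_eq_conjTranspose]
    simp [Matrix.conjTranspose_sub, Matrix.conjTranspose_smul, Matrix.conjTranspose_vecMulVec]
  rw [h1]
  have h2 : Matrix.vecMulVec v (star v) * Matrix.vecMulVec v (star v)
      = (star v ⬝ᵥ v) • Matrix.vecMulVec v (star v) := by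
    ext i j
    simp [Matrix.vecMulVec_mul_vecMulVec, Matrix.vecMulVec_apply]
    ring
  have h3 : ((c : ℂ) • Matrix.vecMulVec v (star v)) * ((c : ℂ) • Matrix.vecMulVec v (star v))
      = (2 : ℂ) • ((c : ℂ) • Matrix.vecMulVec v (star v)) := by
    rw [Matrix.smul_mul, Matrix.mul_smul, h2, ← hc]
    simp only [smul_smul]; congr 1; ring
  rw [sub_mul, mul_sub, mul_sub, h3, two_smul]
  simp

/-- The rotated vector `U⁻¹ φ`. -/
def psi {D : ℕ} (φ : Fin D → ℂ) (U : UG D) : Fin D → ℂ :=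
  ((U⁻¹ : UG D) : Matrix (Fin D) (Fin D) ℂ).mulVec φ

lemma psi_cont {D : ℕ} (φ : Fin D → ℂ) : Continuous (psi φ) := by
  unfold psi
  exact Continuous.matrix_mulVec (continuous_subtype_val.comp continuous_inv) continuous_const

lemma cont_integrable {D : ℕ} (μ : Measure (UG D)) [IsProbabilityMeasure μ] {f : UG D → ℝ}
    (hf : Continuous f) : Integrable f μ :=
  hf.integrable_of_hasCompactSupport (HasCompactSupport.of_compactSpace f)

lemma nsq_eq {D : ℕ} (v : Fin D → ℂ) : ((nsq v : ℝ) : ℂ) = star v ⬝ᵥ v := by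
  simp [nsq, dotProduct, Complex.conj_mul']

lemma nsq_unitary {D : ℕ} (U : UG D) (v : Fin D → ℂ) :
    nsq ((U : Matrix (Fin D) (Fin D) ℂ).mulVec v) = nsq v := by
  have : ((nsq ((U : Matrix (Fin D) (Fin D) ℂ).mulVec v) : ℝ) : ℂ) = (nsq v : ℝ) := by
    rw [nsq_eq, nsq_eq, Matrix.star_mulVec, Matrix.dotProduct_mulVec, Matrix.vecMul_vecMul,
      ← Matrix.star_eq_conjTranspose, Matrix.UnitaryGroup.star_mul_self, Matrix.vecMul_one]
  exact_mod_cast this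

lemma psi_inv {D : ℕ} (μ : Measure (UG D)) [μ.IsHaarMeasure] [IsProbabilityMeasure μ]
    (φ : Fin D → ℂ) (V : UG D) (F : (Fin D → ℂ) → ℝ) :
    ∫ U, F ((V : Matrix (Fin D) (Fin D) ℂ).mulVec (psi φ U)) ∂μ = ∫ U, F (psi φ U) ∂μ := by
  have := ug_right μ
  rw [← integral_mul_right_eq_self (μ := μ) (fun U => F (psi φ U)) V⁻¹]
  congr 1; ext U
  simp [psi, mul_inv_rev, Matrix.mulVec_mulVec]

lemma psi_hh {D : ℕ} (μ : Measure (UG D)) [μ.IsHaarMeasure] [IsProbabilityMeasure μ]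
    (φ : Fin D → ℂ) {i j : Fin D} (hij : i ≠ j) (t : ℂ) (c : ℝ) (hc : c * (1 + ‖t‖ ^ 2) = 2) :
    ∫ U, ‖psi φ U i - c * (psi φ U i + star t * psi φ U j)‖ ^ 4 ∂μ = ∫ U, ‖psi φ U i‖ ^ 4 ∂μ := by
  have hv : (c : ℂ) * (star (Pi.single i 1 + Pi.single j t : Fin D → ℂ)
      ⬝ᵥ (Pi.single i 1 + Pi.single j t)) = 2 := by
    have : star (Pi.single i 1 + Pi.single j t : Fin D → ℂ)
      ⬝ᵥ (Pi.single i 1 + Pi.single j t) = 1 + (‖t‖ : ℂ) ^ 2 := by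
      simp [hij, hij.symm, Complex.conj_mul']
    rw [this]; exact_mod_cast hc
  rw [← psi_inv μ φ ⟨_, hh_mem _ c hv⟩ (fun w => ‖w i‖ ^ 4)]
  congr 1; ext U
  congr 2
  simp [Matrix.sub_mulVec, Matrix.smul_mulVec, Matrix.vecMulVec_mulVec, hij, add_dotProduct]
  ring

lemma four_avg (x y : ℂ) :
    (∑ k : Fin 4, ‖x - ((2/5 : ℝ) : ℂ) * (x + star (2 * Complex.I ^ (k : ℕ)) * y)‖ ^ 4)
      = 4 * (81 / 625 * ‖x‖ ^ 4 + 256 / 625 * ‖y‖ ^ 4 + 4 * 144 / 625 * (‖x‖ ^ 2 * ‖y‖ ^ 2)) := by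
  have h4 : ∀ z : ℂ, ‖z‖ ^ 4 = (z.re ^ 2 + z.im ^ 2) ^ 2 := by
    intro z
    rw [show ‖z‖ ^ 4 = (‖z‖ ^ 2) ^ 2 by ring, Complex.sq_norm, Complex.normSq_apply]; ring
  have h2 : ∀ z : ℂ, ‖z‖ ^ 2 = (z.re ^ 2 + z.im ^ 2) := by
    intro z
    rw [Complex.sq_norm, Complex.normSq_apply]; ring
  have i3 : Complex.I ^ 3 = - Complex.I := by simp [pow_succ]
  simp only [Fin.sum_univ_four, h4, h2]
  simp [i3]
  ring

lemma mom_swap {D : ℕ} (μ : Measure (UG D)) [μ.IsHaarMeasure] [IsProbabilityMeasure μ]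
    (φ : Fin D → ℂ) (i j : Fin D) :
    ∫ U, ‖psi φ U j‖ ^ 4 ∂μ = ∫ U, ‖psi φ U i‖ ^ 4 ∂μ := by
  by_cases hij : i = j
  · rw [hij]
  rw [← psi_hh μ φ hij (-1) 1 (by norm_num)]
  simp

lemma int4 {D : ℕ} (μ : Measure (UG D)) [IsProbabilityMeasure μ]
    (φ : Fin D → ℂ) (i j : Fin D) : Integrable (fun U => ‖psi φ U i‖ ^ 2 * ‖psi φ U j‖ ^ 2) μ := by
  have := psi_cont φ
  exact cont_integrable μ (by fun_prop)

lemma mom_mix {D : ℕ} (μ : Measure (UG D)) [μ.IsHaarMeasure] [IsProbabilityMeasure μ]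
    (φ : Fin D → ℂ) {i j : Fin D} (hij : i ≠ j) :
    ∫ U, ‖psi φ U i‖ ^ 2 * ‖psi φ U j‖ ^ 2 ∂μ = (∫ U, ‖psi φ U i‖ ^ 4 ∂μ) / 2 := by
  have hc := psi_cont φ
  have h1 : ∫ U, (∑ k : Fin 4, ‖psi φ U i - ((2/5 : ℝ) : ℂ) *
      (psi φ U i + star (2 * Complex.I ^ (k : ℕ)) * psi φ U j)‖ ^ 4) ∂μ
      = 4 * ∫ U, ‖psi φ U i‖ ^ 4 ∂μ := by
    rw [integral_finsetSum]
    · have : ∀ k : Fin 4, _ = _ := fun k =>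
        psi_hh μ φ hij (2 * Complex.I ^ (k : ℕ)) (2/5) (by norm_num)
      simp only [this]
      simp
    · intro k _
      exact cont_integrable μ (by fun_prop)
  simp only [four_avg] at h1
  have i1 : Integrable (fun U => ‖psi φ U i‖ ^ 4) μ := cont_integrable μ (by fun_prop)
  have i2 : Integrable (fun U => ‖psi φ U j‖ ^ 4) μ := cont_integrable μ (by fun_prop)
  rw [integral_const_mul, integral_add (cont_integrable μ (by fun_prop))
    ((int4 μ φ i j).const_mul _), integral_add (i1.const_mul _) (i2.const_mul _),
    integral_const_mul, integral_const_mul, integral_const_mul, mom_swap μ φ i j] at h1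
  linarith

lemma psi_sum {D : ℕ} (φ : Fin D → ℂ) (hφ : nsq φ = 1) (U : UG D) : ∑ i, ‖psi φ U i‖ ^ 2 = 1 := by
  rw [← hφ, ← nsq_unitary U⁻¹ φ]; rfl

lemma mom_sum {D : ℕ} (μ : Measure (UG D)) [μ.IsHaarMeasure] [IsProbabilityMeasure μ]
    (φ : Fin D → ℂ) (i : Fin D) (B : Finset (Fin D)) :
    ∑ j ∈ B, ∫ U, ‖psi φ U i‖ ^ 2 * ‖psi φ U j‖ ^ 2 ∂μ
      = (B.card + if i ∈ B then 1 else 0) * ((∫ U, ‖psi φ U i‖ ^ 4 ∂μ) / 2) := by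
  have : ∀ j, ∫ U, ‖psi φ U i‖ ^ 2 * ‖psi φ U j‖ ^ 2 ∂μ =
      (∫ U, ‖psi φ U i‖ ^ 4 ∂μ) / 2 + if i = j then (∫ U, ‖psi φ U i‖ ^ 4 ∂μ) / 2 else 0 := by
    intro j
    split_ifs with h
    · subst h
      rw [add_halves]; congr 1; ext U; ring
    · rw [mom_mix μ φ h, add_zero]
  simp only [this, Finset.sum_add_distrib, Finset.sum_const, Finset.sum_ite_eq]
  split_ifs <;> simp <;> ring

lemma mom_one {D : ℕ} (μ : Measure (UG D)) [μ.IsHaarMeasure] [IsProbabilityMeasure μ]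
    (φ : Fin D → ℂ) (hφ : nsq φ = 1) (i : Fin D) :
    ∫ U, ‖psi φ U i‖ ^ 2 ∂μ = (D + 1) * ((∫ U, ‖psi φ U i‖ ^ 4 ∂μ) / 2) := by
  have := mom_sum μ φ i Finset.univ
  rw [← integral_finsetSum _ (fun j _ => int4 μ φ i j)] at this
  simp only [← Finset.mul_sum, psi_sum φ hφ] at this
  simpa using this

lemma mom_four {D : ℕ} (μ : Measure (UG D)) [μ.IsHaarMeasure] [IsProbabilityMeasure μ]
    (φ : Fin D → ℂ) (hφ : nsq φ = 1) (i : Fin D) :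
    (∫ U, ‖psi φ U i‖ ^ 4 ∂μ) / 2 = 1 / (D * (D + 1)) := by
  have hc := psi_cont φ
  have h : ∑ j, ∫ U, ‖psi φ U j‖ ^ 2 ∂μ = 1 := by
    rw [← integral_finsetSum _ (fun j _ => cont_integrable μ (by fun_prop))]
    simp [psi_sum φ hφ]
  simp only [mom_one μ φ hφ, mom_swap μ φ i] at h
  simp at h
  have hD : (0 : ℝ) < D := by exact_mod_cast i.pos
  field_simp
  linarith

lemma var_block {D : ℕ} (μ : Measure (UG D)) [μ.IsHaarMeasure] [IsProbabilityMeasure μ]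
    (φ : Fin D → ℂ) (hφ : nsq φ = 1) (hD : 0 < D) (B : Finset (Fin D)) :
    ∫ U, ((∑ i ∈ B, ‖psi φ U i‖ ^ 2) - B.card / D) ^ 2 ∂μ
      = B.card * (D - B.card) / (D ^ 2 * (D + 1)) := by
  have hc := psi_cont φ
  have hD' : (0 : ℝ) < D := by exact_mod_cast hD
  have e : ∀ U, ((∑ i ∈ B, ‖psi φ U i‖ ^ 2) - B.card / D : ℝ) ^ 2 =
      (∑ i ∈ B, ∑ j ∈ B, ‖psi φ U i‖ ^ 2 * ‖psi φ U j‖ ^ 2)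
      - 2 * (B.card / D) * (∑ i ∈ B, ‖psi φ U i‖ ^ 2) + (B.card / D : ℝ) ^ 2 := by
    intro U
    rw [← Finset.sum_mul_sum]; ring
  simp only [e]
  rw [integral_add (cont_integrable μ (by fun_prop)) (integrable_const _),
    integral_sub (cont_integrable μ (by fun_prop)) (cont_integrable μ (by fun_prop)),
    integral_const_mul, integral_finsetSum _ (fun j _ => cont_integrable μ (by fun_prop)),
    integral_finsetSum _ (fun j _ => cont_integrable μ (by fun_prop))]
  have h1 : ∀ i ∈ B, ∫ U, ∑ j ∈ B, ‖psi φ U i‖ ^ 2 * ‖psi φ U j‖ ^ 2 ∂μ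
      = (B.card + 1) * (1 / (D * (D + 1))) := by
    intro i hi
    rw [integral_finsetSum _ (fun j _ => int4 μ φ i j), mom_sum, mom_four μ φ hφ, if_pos hi]
  rw [Finset.sum_congr rfl h1]
  simp only [mom_one μ φ hφ, mom_four μ φ hφ]
  simp
  field_simp
  ring

/-- The index set of a block. -/
def blk {N : ℕ} (D : ℕ) (d : Fin N → ℕ) (ν : Fin N) : Finset (Fin D) :=
  Finset.univ.filter fun i => (∑ μ ∈ Finset.univ.filter (fun μ => μ < ν), d μ) ≤ (i : ℕ) ∧
      (i : ℕ) < ∑ μ ∈ Finset.univ.filter (fun μ => μ ≤ ν), d μ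

lemma blk_card {N : ℕ} (D : ℕ) (d : Fin N → ℕ) (hD : D = ∑ ν, d ν) (ν : Fin N) :
    (blk D d ν).card = d ν := by
  have h1 : ∑ μ ∈ Finset.univ.filter (fun μ => μ ≤ ν), d μ
      = (∑ μ ∈ Finset.univ.filter (fun μ => μ < ν), d μ) + d ν := by
    have : Finset.univ.filter (fun μ => μ ≤ ν) = insert ν (Finset.univ.filter (fun μ => μ < ν)) := by
      ext x; simp [le_iff_eq_or_lt]
    rw [this, Finset.sum_insert (by simp), add_comm]
  have h2 : ∑ μ ∈ Finset.univ.filter (fun μ => μ ≤ ν), d μ ≤ D := by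
    rw [hD]; exact Finset.sum_le_sum_of_subset (Finset.filter_subset _ _)
  have : (blk D d ν).map Fin.valEmbedding = Finset.Ico
      (∑ μ ∈ Finset.univ.filter (fun μ => μ < ν), d μ)
      (∑ μ ∈ Finset.univ.filter (fun μ => μ ≤ ν), d μ) := by
    ext x
    simp only [blk, Finset.mem_map, Finset.mem_filter, Finset.mem_univ, true_and, Finset.mem_Ico,
      Fin.valEmbedding_apply]
    constructor
    · rintro ⟨i, hi, rfl⟩; exact hi
    · intro h; exact ⟨⟨x, by omega⟩, h, rfl⟩
  rw [← Finset.card_map Fin.valEmbedding, this, Nat.card_Ico, h1]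
  omega

lemma nsq_rot {N D : ℕ} (d : Fin N → ℕ) (ν : Fin N) (φ : Fin D → ℂ) (U : UG D) :
    nsq ((rotProj U (blockProj D d ν)).mulVec φ) = ∑ i ∈ blk D d ν, ‖psi φ U i‖ ^ 2 := by
  unfold rotProj
  rw [mul_assoc, ← Matrix.mulVec_mulVec, nsq_unitary, ← Matrix.mulVec_mulVec]
  change nsq ((blockProj D d ν).mulVec (psi φ U)) = _
  unfold nsq blockProj blk
  rw [Finset.sum_filter (s := (Finset.univ : Finset (Fin D)))]
  refine Finset.sum_congr rfl fun i _ => ?_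
  rw [Matrix.mulVec_diagonal]
  split_ifs <;> simp

theorem stmt8 (D N : ℕ) (hN : 1 ≤ N) (ε δ : ℝ) (hε : 0 < ε) (hδ : 0 < δ)
    (d : Fin N → ℕ) (hd : ∀ ν, 0 < d ν) (hD : D = ∑ ν, d ν)
    (hlow : ∀ ν, (D : ℝ) - ε ^ 2 * δ * D * (D + 1) / N ^ 2 < d ν)
    (φ : Fin D → ℂ) (hφ : nsq φ = 1)
    (μ : Measure (UG D)) [μ.IsHaarMeasure] [IsProbabilityMeasure μ] :
    1 - δ < (μ {U : UG D | ∀ ν,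
        |nsq ((rotProj U (blockProj D d ν)).mulVec φ) - d ν / D| <
          ε * Real.sqrt (d ν / (D * N))}).toReal := by
  have hc := psi_cont φ
  have hN' : (0 : ℝ) < N := by exact_mod_cast hN
  have hDpos : 0 < D := by
    rw [hD]
    exact (hd ⟨0, hN⟩).trans_le (Finset.single_le_sum (f := d) (fun _ _ => Nat.zero_le _)
      (Finset.mem_univ _))
  have hD' : (0 : ℝ) < D := by exact_mod_cast hDpos
  simp only [nsq_rot]
  let bad : Fin N → Set (UG D) := fun ν =>
    {U | ε * Real.sqrt (d ν / (D * N)) ≤ |∑ i ∈ blk D d ν, ‖psi φ U i‖ ^ 2 - d ν / D|}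
  have hset : {U : UG D | ∀ ν, |∑ i ∈ blk D d ν, ‖psi φ U i‖ ^ 2 - d ν / D| <
      ε * Real.sqrt (d ν / (D * N))} = (⋃ ν, bad ν)ᶜ := by
    ext U; simp [bad]
  have hmeas : MeasurableSet (⋃ ν, bad ν) := by
    refine MeasurableSet.iUnion fun ν => ?_
    exact (isClosed_le continuous_const (by fun_prop)).measurableSet
  rw [hset]
  change 1 - δ < μ.real _
  rw [probReal_compl_eq_one_sub hmeas]
  have hbad : ∀ ν, μ.real (bad ν) < δ / N := by
    intro ν
    have hdν : (0 : ℝ) < d ν := by exact_mod_cast hd ν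
    have hv := var_block μ φ hφ hDpos (blk D d ν)
    rw [blk_card D d hD ν] at hv
    have hM := mul_meas_ge_le_integral_of_nonneg (μ := μ)
      (f := fun U => (∑ i ∈ blk D d ν, ‖psi φ U i‖ ^ 2 - d ν / D : ℝ) ^ 2)
      (ae_of_all _ fun U => sq_nonneg _) (cont_integrable μ (by fun_prop))
      (ε ^ 2 * (d ν / (D * N)))
    rw [hv] at hM
    have hsub : bad ν ⊆ {U | ε ^ 2 * (d ν / (D * N)) ≤
        (∑ i ∈ blk D d ν, ‖psi φ U i‖ ^ 2 - d ν / D : ℝ) ^ 2} := by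
      intro U hU
      have h := pow_le_pow_left₀ (by positivity) (show ε * Real.sqrt (d ν / (D * N)) ≤ _ from hU) 2
      rw [mul_pow, Real.sq_sqrt (by positivity), sq_abs] at h
      exact h
    refine (measureReal_mono hsub).trans_lt ?_
    have ht : 0 < ε ^ 2 * ((d ν : ℝ) / (D * N)) := by positivity
    refine lt_of_mul_lt_mul_left (hM.trans_lt ?_) ht.le
    have hl := hlow ν
    have : ((D : ℝ) - d ν) < ε ^ 2 * δ * D * (D + 1) / N ^ 2 := by linarith
    calc (d ν : ℝ) * (D - d ν) / (D ^ 2 * (D + 1))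
        < d ν * (ε ^ 2 * δ * D * (D + 1) / N ^ 2) / (D ^ 2 * (D + 1)) := by gcongr
      _ = _ := by field_simp
  have : μ.real (⋃ ν, bad ν) < δ := by
    calc μ.real (⋃ ν, bad ν) ≤ ∑ ν, μ.real (bad ν) := measureReal_iUnion_fintype_le _
      _ < ∑ _ν : Fin N, δ / N :=
        Finset.sum_lt_sum_of_nonempty ⟨⟨0, hN⟩, Finset.mem_univ _⟩ fun ν _ => hbad ν
      _ = δ := by simp; field_simp
  linarith
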